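/- arXiv:2603.14338 — 3 statements merged into one kernel-verified Lean document; each statement's English description precedes it below -/
import Mathlib

section
/- Let n ≥ 1, let S be a finite nonempty subset of ℝⁿ, and let c : S → ℝ satisfy c(α) > 0 for all α ∈ S. Then for x, y ∈ ℝⁿ, equality holds in the inequality (∑_{α∈S} c(α) e^{⟨α,(x+y)/2⟩})² ≤ (∑_{α∈S} c(α) e^{⟨α,x⟩}) · (∑_{α∈S} c(α) e^{⟨α,y⟩}) if and only if ⟨α − β, x − y⟩ = 0 for all α, β ∈ S (equivalently, α ↦ ⟨α, x − y⟩ is constant on S). -/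
/-!
Put `p α = exp (⟨α, x⟩ / 2)` and `q α = exp (⟨α, y⟩ / 2)`. The three sums of the theorem are
`∑ c p q`, `∑ c p ^ 2` and `∑ c q ^ 2`, and the weighted Lagrange identity
(`lagrange_identity_weighted`) writes twice the Cauchy–Schwarz defect as
`∑ α, ∑ β, c α * c β * (p α * q β - q α * p β) ^ 2`. As the weights are positive, the defect
vanishes iff `p α * q β = q α * p β` for all `α, β ∈ S`; taking logarithms, this says
`⟨α, x⟩ + ⟨β, y⟩ = ⟨α, y⟩ + ⟨β, x⟩`, that is, `⟨α - β, x - y⟩ = 0`.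
-/

theorem lagrange_identity_weighted {ι : Type*} (S : Finset ι) (c p q : ι → ℝ) :
    2 * ((∑ i ∈ S, c i * p i ^ 2) * (∑ i ∈ S, c i * q i ^ 2) - (∑ i ∈ S, c i * (p i * q i)) ^ 2) =
      ∑ i ∈ S, ∑ j ∈ S, c i * c j * (p i * q j - q i * p j) ^ 2 := by
  have h : ∀ i j, c i * c j * (p i * q j - q i * p j) ^ 2 =
      (c i * p i ^ 2) * (c j * q j ^ 2) + (c i * q i ^ 2) * (c j * p j ^ 2)
        - 2 * ((c i * (p i * q i)) * (c j * (p j * q j))) := fun i j => by ring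
  simp only [h, Finset.sum_sub_distrib, Finset.sum_add_distrib, ← Finset.mul_sum,
    ← Finset.sum_mul]
  ring

theorem cauchySchwarz_weighted_eq_iff {ι : Type*} (S : Finset ι) (c p q : ι → ℝ)
    (hc : ∀ i ∈ S, 0 < c i) :
    (∑ i ∈ S, c i * (p i * q i)) ^ 2 = (∑ i ∈ S, c i * p i ^ 2) * (∑ i ∈ S, c i * q i ^ 2) ↔
      ∀ i ∈ S, ∀ j ∈ S, p i * q j = q i * p j := by
  have hL := lagrange_identity_weighted S c p q
  have hnn : ∀ i ∈ S, ∀ j ∈ S, 0 ≤ c i * c j * (p i * q j - q i * p j) ^ 2 := fun i hi j hj =>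
    mul_nonneg (mul_pos (hc i hi) (hc j hj)).le (sq_nonneg _)
  have hdefect : (∑ i ∈ S, c i * (p i * q i)) ^ 2 =
      (∑ i ∈ S, c i * p i ^ 2) * (∑ i ∈ S, c i * q i ^ 2) ↔
      ∑ i ∈ S, ∑ j ∈ S, c i * c j * (p i * q j - q i * p j) ^ 2 = 0 := by
    constructor <;> intro h <;> linarith
  rw [hdefect, Finset.sum_eq_zero_iff_of_nonneg fun i hi => Finset.sum_nonneg (hnn i hi)]
  refine forall₂_congr fun i hi => ?_
  rw [Finset.sum_eq_zero_iff_of_nonneg (hnn i hi)]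
  refine forall₂_congr fun j hj => ?_
  rw [mul_eq_zero_iff_left (mul_pos (hc i hi) (hc j hj)).ne', sq_eq_zero_iff, sub_eq_zero]

/-- Equality case of the midpoint (Cauchy--Schwarz) inequality for exponential sums:
equality holds iff α ↦ ⟨α, x − y⟩ is constant on S. -/
theorem expSum_midpoint_sq_eq_iff (n : ℕ) (hn : 1 ≤ n) (S : Finset (Fin n → ℝ))
    (hS : S.Nonempty) (c : (Fin n → ℝ) → ℝ) (hc : ∀ α ∈ S, 0 < c α) (x y : Fin n → ℝ) :
    (∑ α ∈ S, c α * Real.exp (∑ j, α j * ((x j + y j) / 2))) ^ 2 =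
        (∑ α ∈ S, c α * Real.exp (∑ j, α j * x j)) *
          (∑ α ∈ S, c α * Real.exp (∑ j, α j * y j)) ↔
      ∀ α ∈ S, ∀ β ∈ S, ∑ j, (α j - β j) * (x j - y j) = 0 := by
  have hmid : ∀ α : Fin n → ℝ, Real.exp (∑ j, α j * ((x j + y j) / 2)) =
      Real.exp ((∑ j, α j * x j) / 2) * Real.exp ((∑ j, α j * y j) / 2) := fun α => by
    rw [← Real.exp_add, ← add_div, ← Finset.sum_add_distrib, Finset.sum_div]
    congr 1
    exact Finset.sum_congr rfl fun j _ => by ring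
  have hsq : ∀ t : ℝ, Real.exp t = Real.exp (t / 2) ^ 2 := fun t => by
    rw [sq, ← Real.exp_add, add_halves]
  simp only [hmid]
  simp only [hsq (∑ j, _ * x j), hsq (∑ j, _ * y j)]
  rw [cauchySchwarz_weighted_eq_iff S c (fun α => Real.exp ((∑ j, α j * x j) / 2))
    (fun α => Real.exp ((∑ j, α j * y j) / 2)) hc]
  refine forall₂_congr fun α _ => forall₂_congr fun β _ => ?_
  have hexpand : ∑ j, (α j - β j) * (x j - y j) =
      ((∑ j, α j * x j) + ∑ j, β j * y j) - ((∑ j, α j * y j) + ∑ j, β j * x j) := by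
    rw [← Finset.sum_add_distrib, ← Finset.sum_add_distrib, ← Finset.sum_sub_distrib]
    exact Finset.sum_congr rfl fun j _ => by ring
  rw [← Real.exp_add, ← Real.exp_add, Real.exp_eq_exp, hexpand]
  constructor <;> intro h <;> linarith
end

section
/- Let n ≥ 1, let S be a finite nonempty subset of ℝⁿ, and let c : S → ℝ satisfy c(α) > 0 for all α ∈ S. Assume that span_ℝ{α − β : α, β ∈ S} = ℝⁿ. Then the function f : ℝⁿ → ℝ defined by f(x) = log(∑_{α∈S} c(α) e^{⟨α,x⟩}) is strictly convex on ℝⁿ. -/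
/-!
Write `L α x = ∑ j, α j * x j`, so that `∑ α ∈ S, c α * exp (L α x - f x) = 1` for every `x`.
For weights `a + b = 1`, strict convexity of `exp` at the points `L α x - f x` and `L α y - f y`,
summed over `α` against the weights `c α`, gives
`∑ α ∈ S, c α * exp (L α (a • x + b • y) - (a * f x + b * f y)) < a + b = 1`,
which is `f (a • x + b • y) < a * f x + b * f y`, as soon as `L α x - f x ≠ L α y - f y` for some
`α ∈ S`. If there were no such `α`, then `L α (x - y)` would not depend on `α ∈ S`, so `x - y` would
be orthogonal to all differences `α - β`, hence zero (`eq_zero_of_dotProduct_const`).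
-/

/-- A vector that has the same dot product with all points of `S` is zero when the differences of
points of `S` span the whole space. -/
lemma eq_zero_of_dotProduct_const {n : ℕ} (S : Finset (Fin n → ℝ))
    (hspan : Submodule.span ℝ {d : Fin n → ℝ | ∃ α ∈ S, ∃ β ∈ S, d = α - β} = ⊤)
    (z : Fin n → ℝ) (k : ℝ) (h : ∀ α ∈ S, α ⬝ᵥ z = k) : z = 0 := by
  have key : ∀ d : Fin n → ℝ, d ⬝ᵥ z = 0 := by
    intro d
    have hd : d ∈ Submodule.span ℝ {d : Fin n → ℝ | ∃ α ∈ S, ∃ β ∈ S, d = α - β} := by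
      rw [hspan]; trivial
    induction hd using Submodule.span_induction with
    | mem d hd =>
      obtain ⟨α, hα, β, hβ, rfl⟩ := hd
      rw [sub_dotProduct, h α hα, h β hβ, sub_self]
    | zero => simp
    | add u v _ _ hu hv => rw [add_dotProduct, hu, hv, add_zero]
    | smul r u _ hu => rw [smul_dotProduct, hu, smul_zero]
  exact dotProduct_self_eq_zero.mp (key z)

/-- If the differences of support vectors span ℝⁿ, then the log-Laurent function is
strictly convex on ℝⁿ. -/
theorem logLaurent_strictConvexOn (n : ℕ) (hn : 1 ≤ n) (S : Finset (Fin n → ℝ))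
    (hS : S.Nonempty) (c : (Fin n → ℝ) → ℝ) (hc : ∀ α ∈ S, 0 < c α)
    (hspan : Submodule.span ℝ {d : Fin n → ℝ | ∃ α ∈ S, ∃ β ∈ S, d = α - β} = ⊤)
    (f : (Fin n → ℝ) → ℝ)
    (hf : ∀ x, f x = Real.log (∑ α ∈ S, c α * Real.exp (∑ j, α j * x j))) :
    StrictConvexOn ℝ Set.univ f := by
  have hpos : ∀ x : Fin n → ℝ, 0 < ∑ α ∈ S, c α * Real.exp (α ⬝ᵥ x) := fun x =>
    Finset.sum_pos (fun α hα => mul_pos (hc α hα) (Real.exp_pos _)) hS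
  have hf' : ∀ x, f x = Real.log (∑ α ∈ S, c α * Real.exp (α ⬝ᵥ x)) := hf
  have hshift : ∀ (x : Fin n → ℝ) (t : ℝ), ∑ α ∈ S, c α * Real.exp (α ⬝ᵥ x - t)
      = (∑ α ∈ S, c α * Real.exp (α ⬝ᵥ x)) / Real.exp t := by
    intro x t
    rw [Finset.sum_div]
    refine Finset.sum_congr rfl fun α _ => ?_
    rw [Real.exp_sub, mul_div_assoc]
  have hone : ∀ x, ∑ α ∈ S, c α * Real.exp (α ⬝ᵥ x - f x) = 1 := by
    intro x
    rw [hshift, hf' x, Real.exp_log (hpos x), div_self (hpos x).ne']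
  refine ⟨convex_univ, fun x _ y _ hxy a b ha hb hab => ?_⟩
  obtain ⟨α₀, hα₀, hne⟩ : ∃ α ∈ S, α ⬝ᵥ x - f x ≠ α ⬝ᵥ y - f y := by
    by_contra! hcon
    refine hxy (sub_eq_zero.mp (eq_zero_of_dotProduct_const S hspan (x - y) (f x - f y) ?_))
    intro α hα
    rw [dotProduct_sub]
    linarith [hcon α hα]
  have hexp : ∀ α : Fin n → ℝ, α ⬝ᵥ (a • x + b • y) - (a * f x + b * f y)
      = a • (α ⬝ᵥ x - f x) + b • (α ⬝ᵥ y - f y) := by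
    intro α
    simp only [dotProduct_add, dotProduct_smul, smul_eq_mul]
    ring
  have hlt : ∑ α ∈ S, c α * Real.exp (α ⬝ᵥ (a • x + b • y) - (a * f x + b * f y))
      < ∑ α ∈ S, c α * (a • Real.exp (α ⬝ᵥ x - f x) + b • Real.exp (α ⬝ᵥ y - f y)) := by
    refine Finset.sum_lt_sum (fun α hα => ?_) ⟨α₀, hα₀, ?_⟩
    · rw [hexp]
      exact mul_le_mul_of_nonneg_left
        (convexOn_exp.2 (Set.mem_univ _) (Set.mem_univ _) ha.le hb.le hab) (hc α hα).le
    · rw [hexp]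
      exact mul_lt_mul_of_pos_left
        (strictConvexOn_exp.2 (Set.mem_univ _) (Set.mem_univ _) hne ha hb hab) (hc α₀ hα₀)
  have hsum : ∑ α ∈ S, c α * (a • Real.exp (α ⬝ᵥ x - f x) + b • Real.exp (α ⬝ᵥ y - f y)) = 1 := by
    calc _ = a * ∑ α ∈ S, c α * Real.exp (α ⬝ᵥ x - f x)
          + b * ∑ α ∈ S, c α * Real.exp (α ⬝ᵥ y - f y) := by
          rw [Finset.mul_sum, Finset.mul_sum, ← Finset.sum_add_distrib]
          refine Finset.sum_congr rfl fun α _ => ?_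
          simp only [smul_eq_mul]
          ring
      _ = 1 := by rw [hone, hone, mul_one, mul_one, hab]
  rw [hsum, hshift, div_lt_one (Real.exp_pos _)] at hlt
  rw [hf' (a • x + b • y), Real.log_lt_iff_lt_exp (hpos _)]
  exact hlt
end

section
/- Let n ≥ 1 and r ≥ 1. For each k = 1,…,r let S_k be a finite nonempty subset of ℤⁿ and let c_k : S_k → ℤ satisfy c_k(α) ≥ 1 for all α ∈ S_k; define f_k : ℝⁿ → ℝ by f_k(x) = log(∑_{α∈S_k} c_k(α) e^{⟨α,x⟩}). Assume there is a subset S ⊆ ⋃_{k=1}^r S_k such that the convex hull of S is full-dimensional (its affine span is ℝⁿ) and its interior contains 0. Then for the function f(x) := max_{k=1,…,r} f_k(x): (i) for every R ∈ ℝ the sublevel set {x ∈ ℝⁿ : f(x) ≤ R} is compact, and (ii) f attains a minimum on ℝⁿ, i.e. there exists x₀ ∈ ℝⁿ with f(x₀) ≤ f(x) for all x ∈ ℝⁿ. -/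
/-!
Each term of the sum defining `fk k` is positive with coefficient at least `1`, so `f x ≤ R` forces
`⟨α, x⟩ ≤ R` for every exponent `α` in the union of the supports, hence `⟨y, x⟩ ≤ R` for every `y`
in the convex hull of the chosen exponents. That hull contains all the vectors `± ε e_j` for some
`ε > 0`, so `|x j| ≤ R / ε` for all `j` (`abs_coord_le_of_le_on_convexHull`). Sublevel sets of the
continuous function `f` are therefore closed subsets of a compact box, and `f` attains its minimum
on the compact nonempty set `{f ≤ f 0}`.
-/

/-- A bound `⟨y, x⟩ ≤ R` for all `y` in a set whose convex hull is a neighbourhood of `0` confines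
`x` to a box that depends only on the set and on `R`. -/
lemma abs_coord_le_of_le_on_convexHull {n : ℕ} {A : Set (Fin n → ℝ)}
    (h0 : (0 : Fin n → ℝ) ∈ interior (convexHull ℝ A)) :
    ∃ ε : ℝ, 0 < ε ∧ ∀ (R : ℝ) (x : Fin n → ℝ), (∀ y ∈ A, ∑ j, y j * x j ≤ R) →
      ∀ j, |x j| ≤ R / ε := by
  obtain ⟨ε, hε, hball⟩ := Metric.nhds_basis_closedBall.mem_iff.1 (mem_interior_iff_mem_nhds.1 h0)
  refine ⟨ε, hε, fun R x hx j => ?_⟩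
  have hconv : Convex ℝ {y : Fin n → ℝ | ∑ j, y j * x j ≤ R} := by
    refine convex_halfSpace_le (f := fun y : Fin n → ℝ => ∑ j, y j * x j) ⟨?_, ?_⟩ R
    · intro a b
      simp [add_mul, Finset.sum_add_distrib]
    · intro a b
      simp [mul_assoc, Finset.mul_sum]
  have hhull : convexHull ℝ A ⊆ {y : Fin n → ℝ | ∑ j, y j * x j ≤ R} := convexHull_min hx hconv
  have key : ∀ t : ℝ, |t| ≤ ε → t * x j ≤ R := by
    intro t ht
    have hmem : Pi.single j t ∈ Metric.closedBall (0 : Fin n → ℝ) ε := by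
      simpa [Pi.norm_single] using ht
    have := hhull (hball hmem)
    simpa [Pi.single_apply] using this
  have h1 := key ε (abs_of_pos hε).le
  have h2 := key (-ε) (by rw [abs_neg, abs_of_pos hε])
  rw [le_div_iff₀ hε]
  rcases abs_cases (x j) with ⟨h, -⟩ | ⟨h, -⟩ <;> rw [h] <;> linarith

/-- If a subset of the union of supports has full-dimensional convex hull whose interior
contains 0, then the maximum of the associated log-Laurent functions has compact sublevel
sets and attains a minimum. -/
theorem max_logLaurent_proper_and_attains_min (n r : ℕ) (hn : 1 ≤ n) (hr : 1 ≤ r)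
    (S : Fin r → Finset (Fin n → ℤ)) (hS : ∀ k, (S k).Nonempty)
    (c : Fin r → (Fin n → ℤ) → ℤ) (hc : ∀ k, ∀ α ∈ S k, 1 ≤ c k α)
    (fk : Fin r → (Fin n → ℝ) → ℝ)
    (hfk : ∀ k x, fk k x =
      Real.log (∑ α ∈ S k, (c k α : ℝ) * Real.exp (∑ j, (α j : ℝ) * x j)))
    (S' : Finset (Fin n → ℤ)) (hS' : S' ⊆ Finset.univ.biUnion S)
    (hfull : affineSpan ℝ
        ((fun α : Fin n → ℤ => fun j => (α j : ℝ)) '' (S' : Set (Fin n → ℤ))) = ⊤)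
    (h0 : (0 : Fin n → ℝ) ∈ interior (convexHull ℝ
        ((fun α : Fin n → ℤ => fun j => (α j : ℝ)) '' (S' : Set (Fin n → ℤ)))))
    (f : (Fin n → ℝ) → ℝ) (hf : ∀ x, f x = ⨆ k : Fin r, fk k x) :
    (∀ R : ℝ, IsCompact {x : Fin n → ℝ | f x ≤ R}) ∧
      ∃ x₀ : Fin n → ℝ, ∀ x : Fin n → ℝ, f x₀ ≤ f x := by
  have : Nonempty (Fin r) := ⟨⟨0, hr⟩⟩
  have hterm : ∀ k (x : Fin n → ℝ), ∀ α ∈ S k,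
      Real.exp (∑ j, (α j : ℝ) * x j) ≤ (c k α : ℝ) * Real.exp (∑ j, (α j : ℝ) * x j) := by
    intro k x α hα
    have h1 : (1 : ℝ) ≤ c k α := by exact_mod_cast hc k α hα
    exact le_mul_of_one_le_left (Real.exp_pos _).le h1
  have hnonneg : ∀ k (x : Fin n → ℝ), ∀ α ∈ S k, 0 ≤ (c k α : ℝ) * Real.exp (∑ j, (α j : ℝ) * x j) :=
    fun k x α hα => (Real.exp_pos _).le.trans (hterm k x α hα)
  have hsum : ∀ k (x : Fin n → ℝ), ∀ α ∈ S k, Real.exp (∑ j, (α j : ℝ) * x j) ≤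
      ∑ α ∈ S k, (c k α : ℝ) * Real.exp (∑ j, (α j : ℝ) * x j) :=
    fun k x α hα => (hterm k x α hα).trans (Finset.single_le_sum (hnonneg k x) hα)
  have hpos : ∀ k (x : Fin n → ℝ), 0 < ∑ α ∈ S k, (c k α : ℝ) * Real.exp (∑ j, (α j : ℝ) * x j) := by
    intro k x
    obtain ⟨α, hα⟩ := hS k
    exact (Real.exp_pos _).trans_le (hsum k x α hα)
  have hlow : ∀ k (x : Fin n → ℝ), ∀ α ∈ S k, ∑ j, (α j : ℝ) * x j ≤ f x := by
    intro k x α hα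
    have h1 : ∑ j, (α j : ℝ) * x j ≤ fk k x := by
      rw [hfk, Real.le_log_iff_exp_le (hpos k x)]
      exact hsum k x α hα
    rw [hf]
    exact h1.trans (le_ciSup (f := fun k => fk k x) (Set.finite_range _).bddAbove k)
  have hfkcont : ∀ k, Continuous (fk k) := by
    intro k
    rw [funext (hfk k)]
    exact Continuous.log (by fun_prop) (fun x => (hpos k x).ne')
  have hfcont : Continuous f := by
    have hf' : f = fun x => Finset.univ.sup' Finset.univ_nonempty (fun k => fk k x) := by
      funext x
      rw [hf, Finset.sup'_univ_eq_ciSup]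
    rw [hf']
    exact Continuous.finset_sup'_apply _ (fun k _ => hfkcont k)
  obtain ⟨ε, -, hbox⟩ := abs_coord_le_of_le_on_convexHull h0
  have hcompact : ∀ R : ℝ, IsCompact {x : Fin n → ℝ | f x ≤ R} := by
    intro R
    refine (isCompact_Icc (a := fun _ : Fin n => -(R / ε)) (b := fun _ => R / ε)).of_isClosed_subset
      (isClosed_le hfcont continuous_const) ?_
    intro x hx
    have hb := hbox R x (by
      rintro _ ⟨α, hα, rfl⟩
      obtain ⟨k, -, hk⟩ := Finset.mem_biUnion.1 (hS' hα)
      exact (hlow k x α hk).trans hx)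
    exact ⟨fun j => (abs_le.1 (hb j)).1, fun j => (abs_le.1 (hb j)).2⟩
  refine ⟨hcompact, ?_⟩
  obtain ⟨x₀, hx₀, hmin⟩ := (hcompact (f 0)).exists_isMinOn ⟨0, le_refl (f 0)⟩ hfcont.continuousOn
  refine ⟨x₀, fun x => ?_⟩
  rcases le_total (f x) (f 0) with h | h
  · exact hmin h
  · exact le_trans hx₀ h
end
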